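/- Let a, b, c be pairwise coprime positive integers with c² = a² + b² + ab, and let m be a positive integer such that the triangle with side lengths (a·(a+2b)·m, b·(b+2a)·m, c²·m) tiles into (a+2b)·(b+2a)·m² congruent copies of the triangle with side lengths (a, b, c). Then the triangle with side lengths (c²·m, (a+2b)·c·m, 3·(a+b)·b·m) tiles into 3·m²·(a+2b)·(a+b) congruent copies of the triangle with side lengths (a, b, c). -/

import Mathlib

noncomputable section

abbrev Plane := EuclideanSpace ℝ (Fin 2)

/-- The point (x, y) in the Euclidean plane. -/
def pt (x y : ℝ) : Plane := (WithLp.equiv 2 (Fin 2 → ℝ)).symm ![x, y]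

/-- `Δ` is a triangle with side lengths `(p, q, r)`: the convex hull of points `P, Q, R`
with `dist Q R = p`, `dist P R = q`, `dist P Q = r`. -/
def IsTriangle (p q r : ℝ) (Δ : Set Plane) : Prop :=
  ∃ P Q R : Plane, dist Q R = p ∧ dist P R = q ∧ dist P Q = r ∧
    Δ = convexHull ℝ {P, Q, R}

/-- `S` tiles into `N` congruent copies of the `(p, q, r)` triangle: there are isometries
`f 1, …, f N` of the plane and a triangle `Δ` with side lengths `(p, q, r)` such that
`S` is the union of the `f i '' Δ` and their interiors are pairwise disjoint. -/
def TilesInto (S : Set Plane) (N : ℕ) (p q r : ℝ) : Prop :=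
  ∃ (f : Fin N → Plane ≃ᵢ Plane) (Δ : Set Plane),
    IsTriangle p q r Δ ∧
    S = ⋃ i, f i '' Δ ∧
    ∀ i j : Fin N, i ≠ j → interior (f i '' Δ) ∩ interior (f j '' Δ) = ∅

def ND (p q r : ℝ) : Prop := (p ^ 2 + q ^ 2 - r ^ 2) ^ 2 < 4 * p ^ 2 * q ^ 2

lemma norm_comb (u v : Plane) (x y : ℝ) :
    ‖x • u + y • v‖ ^ 2 = x ^ 2 * ‖u‖ ^ 2 + y ^ 2 * ‖v‖ ^ 2
      + x * y * (‖u‖ ^ 2 + ‖v‖ ^ 2 - ‖u - v‖ ^ 2) := by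
  rw [norm_add_sq_real, norm_sub_sq_real, norm_smul, norm_smul, inner_smul_left, inner_smul_right,
    mul_pow, mul_pow, Real.norm_eq_abs, Real.norm_eq_abs, sq_abs, sq_abs]
  simp
  ring

lemma coords (u v : Plane) (h : ND ‖u‖ ‖v‖ ‖u - v‖) :
    ∃ X Y : Plane →L[ℝ] ℝ, X u = 1 ∧ X v = 0 ∧ Y u = 0 ∧ Y v = 1 ∧
      ∀ z, z = X z • u + Y z • v := by
  unfold ND at h
  have hli : LinearIndependent ℝ ![u, v] := by
    rw [LinearIndependent.pair_iff]
    intro s t hst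
    have h1 := norm_comb u v s t
    rw [hst] at h1
    simp only [norm_zero] at h1
    set A := ‖u‖ ^ 2
    set B := ‖v‖ ^ 2
    set C := A + B - ‖u - v‖ ^ 2
    have hA : 0 ≤ A := by positivity
    have hB : 0 ≤ B := by positivity
    have hAB : C ^ 2 < 4 * A * B := h
    have hA' : 0 < A := by
      rcases hA.lt_or_eq with h' | h'
      · exact h'
      · rw [← h'] at hAB; nlinarith [sq_nonneg C]
    have h2 : 0 = (2 * A * s + t * C) ^ 2 + t ^ 2 * (4 * A * B - C ^ 2) := by
      linear_combination 4 * A * h1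
    have h3 : t = 0 := by
      by_contra ht
      have : 0 < t ^ 2 * (4 * A * B - C ^ 2) := mul_pos (by positivity) (by linarith)
      nlinarith [sq_nonneg (2 * A * s + t * C)]
    subst h3
    refine ⟨?_, rfl⟩
    have : 2 * A * s + 0 * C = 0 := by
      apply pow_eq_zero_iff (two_ne_zero) |>.1
      linarith
    have : A * s = 0 := by linarith
    rcases mul_eq_zero.1 this with h | h
    · exact absurd h hA'.ne'
    · exact h
  let B := basisOfLinearIndependentOfCardEqFinrank hli (by simp)
  have hB0 : B 0 = u := by simp [B]
  have hB1 : B 1 = v := by simp [B]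
  refine ⟨(B.coord 0).toContinuousLinearMap, (B.coord 1).toContinuousLinearMap, ?_, ?_, ?_, ?_, ?_⟩
  · rw [← hB0]; simp
  · rw [← hB1]; simp
  · rw [← hB0]; simp
  · rw [← hB1]; simp
  · intro z
    have := B.sum_repr z
    rw [Fin.sum_univ_two, hB0, hB1] at this
    simpa using this.symm

lemma sss (P Q R P' Q' R' : Plane) (h : ND (dist Q R) (dist P R) (dist P Q))
    (h1 : dist Q R = dist Q' R') (h2 : dist P R = dist P' R') (h3 : dist P Q = dist P' Q') :
    ∃ f : Plane ≃ᵢ Plane, f P = P' ∧ f Q = Q' ∧ f R = R' := by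
  have e3 : ∀ A B C : Plane, dist A B = ‖(B - C) - (A - C)‖ := by
    intro A B C
    rw [dist_comm, dist_eq_norm]; congr 1; abel
  have h1' : ‖Q - R‖ = ‖Q' - R'‖ := by simpa [dist_eq_norm] using h1
  have h2' : ‖P - R‖ = ‖P' - R'‖ := by simpa [dist_eq_norm] using h2
  have h3' : ‖(Q - R) - (P - R)‖ = ‖(Q' - R') - (P' - R')‖ := by rw [← e3, ← e3]; exact h3
  rw [e3 P Q R, dist_eq_norm, dist_eq_norm] at h
  obtain ⟨X, Y, a1, a2, a3, a4, a5⟩ := coords _ _ h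
  let L : Plane →ₗ[ℝ] Plane :=
    (X : Plane →ₗ[ℝ] ℝ).smulRight (Q' - R') + (Y : Plane →ₗ[ℝ] ℝ).smulRight (P' - R')
  have hL : ∀ z, L z = X z • (Q' - R') + Y z • (P' - R') := fun z => rfl
  let L' : Plane →ₗᵢ[ℝ] Plane := ⟨L, by
    intro z
    rw [← sq_eq_sq₀ (norm_nonneg _) (norm_nonneg _)]
    conv_rhs => rw [a5 z]
    rw [hL, norm_comb, norm_comb, h1', h2', h3']⟩
  let E := L'.toLinearIsometryEquiv rfl
  have hE : ∀ z, E z = X z • (Q' - R') + Y z • (P' - R') := fun z => rfl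
  refine ⟨((IsometryEquiv.subRight R).trans E.toIsometryEquiv).trans (IsometryEquiv.addRight R'),
    ?_, ?_, ?_⟩
  · simp only [IsometryEquiv.trans_apply, IsometryEquiv.subRight_apply,
      LinearIsometryEquiv.coe_toIsometryEquiv, IsometryEquiv.addRight_apply, hE, a2, a4]
    module
  · simp only [IsometryEquiv.trans_apply, IsometryEquiv.subRight_apply,
      LinearIsometryEquiv.coe_toIsometryEquiv, IsometryEquiv.addRight_apply, hE, a1, a3]
    module
  · simp only [IsometryEquiv.trans_apply, IsometryEquiv.subRight_apply,
      LinearIsometryEquiv.coe_toIsometryEquiv, IsometryEquiv.addRight_apply, hE, sub_self, map_zero]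
    module

lemma image_hull (f : Plane ≃ᵢ Plane) (P Q R : Plane) :
    f '' convexHull ℝ {P, Q, R} = convexHull ℝ {f P, f Q, f R} := by
  have := AffineMap.image_convexHull
    (f.toRealAffineIsometryEquiv.toAffineEquiv : Plane →ᵃ[ℝ] Plane) {P, Q, R}
  have hc : ⇑(f.toRealAffineIsometryEquiv.toAffineEquiv : Plane →ᵃ[ℝ] Plane) = f := rfl
  rw [hc] at this
  rw [this, Set.image_insert_eq, Set.image_pair]

lemma isTriangle_image (f : Plane ≃ᵢ Plane) {p q r : ℝ} {T : Set Plane}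
    (h : IsTriangle p q r T) : IsTriangle p q r (f '' T) := by
  obtain ⟨P, Q, R, h1, h2, h3, rfl⟩ := h
  exact ⟨f P, f Q, f R, by rw [f.isometry.dist_eq, h1], by rw [f.isometry.dist_eq, h2],
    by rw [f.isometry.dist_eq, h3],
    image_hull f P Q R⟩

lemma isTriangle_congr {p q r : ℝ} (hnd : ND p q r) {T T' : Set Plane}
    (h : IsTriangle p q r T) (h' : IsTriangle p q r T') : ∃ f : Plane ≃ᵢ Plane, f '' T = T' := by
  obtain ⟨P, Q, R, h1, h2, h3, rfl⟩ := h
  obtain ⟨P', Q', R', h1', h2', h3', rfl⟩ := h'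
  obtain ⟨f, e1, e2, e3⟩ := sss P Q R P' Q' R' (by rw [h1, h2, h3]; exact hnd)
    (by rw [h1, h1']) (by rw [h2, h2']) (by rw [h3, h3'])
  exact ⟨f, by rw [image_hull, e1, e2, e3]⟩

def TI (ι : Type) (S : Set Plane) (p q r : ℝ) : Prop :=
  ∃ T : ι → Set Plane, (∀ i, IsTriangle p q r (T i)) ∧ S = ⋃ i, T i ∧
    ∀ i j, i ≠ j → interior (T i) ∩ interior (T j) = ∅

lemma TI_of {S : Set Plane} {N : ℕ} {p q r : ℝ} (h : TilesInto S N p q r) :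
    TI (Fin N) S p q r := by
  obtain ⟨f, T, hT, hS, hd⟩ := h
  exact ⟨fun i => f i '' T, fun i => isTriangle_image _ hT, hS, hd⟩

lemma of_TI {ι : Type} [Fintype ι] [Nonempty ι] {S : Set Plane} {N : ℕ} {p q r : ℝ}
    (hnd : ND p q r) (hN : Fintype.card ι = N) (h : TI ι S p q r) : TilesInto S N p q r := by
  obtain ⟨T, hT, hS, hd⟩ := h
  let i0 : ι := Classical.arbitrary ι
  choose f hf using fun i => isTriangle_congr hnd (hT i0) (hT i)
  let e := Fintype.equivFinOfCardEq hN
  refine ⟨fun n => f (e.symm n), T i0, hT i0, ?_, ?_⟩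
  · simp only [hf]
    rw [hS]
    exact (e.symm.surjective.iUnion_comp T).symm
  · intro i j hij
    rw [hf, hf]
    exact hd _ _ (fun h => hij (e.symm.injective h))

lemma TI_image {ι : Type} {S : Set Plane} {p q r : ℝ} (f : Plane ≃ᵢ Plane)
    (h : TI ι S p q r) : TI ι (f '' S) p q r := by
  obtain ⟨T, hT, hS, hd⟩ := h
  refine ⟨fun i => f '' T i, fun i => isTriangle_image _ (hT i), ?_, ?_⟩
  · rw [hS, Set.image_iUnion]
  · intro i j hij
    have hi : ∀ U : Set Plane, interior (f '' U) = f '' interior U :=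
      fun U => (f.toHomeomorph.image_interior U).symm
    simp only [hi]
    rw [← Set.image_inter f.injective, hd i j hij, Set.image_empty]

lemma TI_union {ι κ : Type} {S S' : Set Plane} {p q r : ℝ}
    (hdis : interior S ∩ interior S' = ∅)
    (h : TI ι S p q r) (h' : TI κ S' p q r) : TI (ι ⊕ κ) (S ∪ S') p q r := by
  obtain ⟨T, hT, hS, hd⟩ := h
  obtain ⟨T', hT', hS', hd'⟩ := h'
  have k1 : ∀ i, interior (T i) ⊆ interior S := fun i =>
    interior_mono (by rw [hS]; exact Set.subset_iUnion T i)
  have k2 : ∀ i, interior (T' i) ⊆ interior S' := fun i =>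
    interior_mono (by rw [hS']; exact Set.subset_iUnion T' i)
  have k : ∀ i j, interior (T i) ∩ interior (T' j) = ∅ := fun i j =>
    Set.subset_empty_iff.1 (hdis ▸ Set.inter_subset_inter (k1 i) (k2 j))
  refine ⟨Sum.elim T T', ?_, ?_, ?_⟩
  · rintro (i | i)
    · exact hT i
    · exact hT' i
  · rw [Set.iUnion_sum, hS, hS']; rfl
  · rintro (i | i) (j | j) hij
    · exact hd i j (fun h => hij (by rw [h]))
    · exact k i j
    · rw [Set.inter_comm]; exact k j i
    · exact hd' i j (fun h => hij (by rw [h]))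

lemma sep (f : Plane →L[ℝ] ℝ) (hf : f ≠ 0) (O : Plane) (t : ℝ) (T T' : Set Plane)
    (h : ∀ z ∈ T, f (z - O) ≤ t) (h' : ∀ z ∈ T', t ≤ f (z - O)) :
    interior T ∩ interior T' = ∅ := by
  by_contra hne
  obtain ⟨w, hw⟩ := Set.nonempty_iff_ne_empty.2 hne
  have ho : IsOpen (interior T ∩ interior T') := isOpen_interior.inter isOpen_interior
  have hopen := f.isOpenMap_of_ne_zero hf _ ho
  have hsub : f '' (interior T ∩ interior T') ⊆ {t + f O} := by
    rintro _ ⟨z, ⟨hz, hz'⟩, rfl⟩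
    have a := h z (interior_subset hz)
    have b := h' z (interior_subset hz')
    rw [map_sub] at a b
    simp only [Set.mem_singleton_iff]
    linarith
  have hi := interior_maximal hsub hopen
  rw [interior_singleton] at hi
  exact hi ⟨w, hw, rfl⟩

lemma mem_hull (A B C z : Plane) : z ∈ convexHull ℝ {A, B, C} ↔
    ∃ x y : ℝ, 0 ≤ x ∧ 0 ≤ y ∧ x + y ≤ 1 ∧ z = A + x • (B - A) + y • (C - A) := by
  constructor
  · intro hz
    let U : Set Plane := {z | ∃ x y : ℝ, 0 ≤ x ∧ 0 ≤ y ∧ x + y ≤ 1 ∧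
      z = A + x • (B - A) + y • (C - A)}
    have hU : Convex ℝ U := by
      rintro _ ⟨x, y, hx, hy, hxy, rfl⟩ _ ⟨x', y', hx', hy', hxy', rfl⟩ s t hs ht hst
      refine ⟨s * x + t * x', s * y + t * y', by positivity, by positivity, by nlinarith, ?_⟩
      obtain rfl : t = 1 - s := by linarith
      module
    refine convexHull_min ?_ hU hz
    rintro w (rfl | rfl | rfl)
    · exact ⟨0, 0, le_rfl, le_rfl, by norm_num, by module⟩
    · exact ⟨1, 0, by norm_num, le_rfl, by norm_num, by module⟩
    · exact ⟨0, 1, le_rfl, by norm_num, by norm_num, by module⟩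
  · rintro ⟨x, y, hx, hy, hxy, rfl⟩
    have hA : A ∈ convexHull ℝ {A, B, C} := subset_convexHull ℝ _ (by simp)
    have hB : B ∈ convexHull ℝ {A, B, C} := subset_convexHull ℝ _ (by simp)
    have hC : C ∈ convexHull ℝ {A, B, C} := subset_convexHull ℝ _ (by simp)
    have := (convex_convexHull ℝ {A, B, C}).sum_mem (t := Finset.univ)
      (w := ![1 - x - y, x, y]) (z := ![A, B, C])
      (by intro i _; fin_cases i <;> simp <;> linarith)
      (by simp [Fin.sum_univ_three]; ring) (by intro i _; fin_cases i <;> simp [hA, hB, hC])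
    simp only [Fin.sum_univ_three] at this
    convert this using 1
    simp
    module

def G (O u v : Plane) (x y s : ℝ) : Set Plane :=
  convexHull ℝ {O + x • u + y • v, O + (x + s) • u + y • v, O + x • u + (y + s) • v}

lemma mem_G {O u v : Plane} {X Y : Plane →L[ℝ] ℝ} (a1 : X u = 1) (a2 : X v = 0)
    (a3 : Y u = 0) (a4 : Y v = 1) (a5 : ∀ z, z = X z • u + Y z • v) {x y s : ℝ} (hs : s ≠ 0)
    (z : Plane) : z ∈ G O u v x y s ↔ 0 ≤ (X (z - O) - x) / s ∧ 0 ≤ (Y (z - O) - y) / s ∧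
      (X (z - O) - x) / s + (Y (z - O) - y) / s ≤ 1 := by
  unfold G
  rw [mem_hull]
  constructor
  · rintro ⟨α, β, h1, h2, h3, rfl⟩
    have e : O + x • u + y • v + α • (O + (x + s) • u + y • v - (O + x • u + y • v)) +
        β • (O + x • u + (y + s) • v - (O + x • u + y • v)) - O
        = (x + α * s) • u + (y + β * s) • v := by module
    rw [e]
    simp only [map_add, map_smul, a1, a2, a3, a4, smul_eq_mul]
    have e1 : ((x + α * s) * 1 + (y + β * s) * 0 - x) / s = α := by field_simp; ring
    have e2 : ((x + α * s) * 0 + (y + β * s) * 1 - y) / s = β := by field_simp; ring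
    rw [e1, e2]
    exact ⟨h1, h2, h3⟩
  · rintro ⟨h1, h2, h3⟩
    refine ⟨_, _, h1, h2, h3, ?_⟩
    have hz : z = O + (X (z - O) • u + Y (z - O) • v) := by rw [← a5]; abel
    generalize X (z - O) = α at hz ⊢
    generalize Y (z - O) = β at hz ⊢
    rw [hz]
    obtain ⟨γ, rfl⟩ : ∃ γ, α = x + γ * s := ⟨(α - x) / s, by field_simp; ring⟩
    obtain ⟨δ, rfl⟩ : ∃ δ, β = y + δ * s := ⟨(β - y) / s, by field_simp; ring⟩
    rw [show (x + γ * s - x) / s = γ by field_simp; ring,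
      show (y + δ * s - y) / s = δ by field_simp; ring]
    module

lemma G_tri (O u v : Plane) (x y s : ℝ) (hs : s = 1 ∨ s = -1) :
    IsTriangle ‖u‖ ‖v‖ ‖u - v‖ (G O u v x y s) := by
  refine ⟨O + x • u + (y + s) • v, O + (x + s) • u + y • v, O + x • u + y • v, ?_, ?_, ?_, ?_⟩
  · rw [dist_eq_norm, show O + (x + s) • u + y • v - (O + x • u + y • v) = s • u by module,
      norm_smul]
    rcases hs with rfl | rfl <;> simp
  · rw [dist_eq_norm, show O + x • u + (y + s) • v - (O + x • u + y • v) = s • v by module,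
      norm_smul]
    rcases hs with rfl | rfl <;> simp
  · rw [dist_comm, dist_eq_norm,
      show O + (x + s) • u + y • v - (O + x • u + (y + s) • v) = s • (u - v) by module,
      norm_smul]
    rcases hs with rfl | rfl <;> simp
  · unfold G
    congr 1
    ext w
    simp only [Set.mem_insert_iff, Set.mem_singleton_iff]
    tauto

def tile (O u v : Plane) (p q : ℕ) : Set Plane :=
  if q ≤ p then G O u v q ((p : ℝ) - q) 1 else G O u v ((p : ℝ) + 1) ((q : ℝ) - p) (-1)

lemma quad (O u v : Plane) (h : ND ‖u‖ ‖v‖ ‖u - v‖) (k : ℕ) (hk : 0 < k) :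
    TI (Fin k × Fin k) (G O u v 0 0 k) ‖u‖ ‖v‖ ‖u - v‖ := by
  obtain ⟨X, Y, a1, a2, a3, a4, a5⟩ := coords u v h
  have hkR : (0 : ℝ) < k := by exact_mod_cast hk
  have up : ∀ p q : ℕ, q ≤ p → ∀ z, z ∈ tile O u v p q ↔ (q : ℝ) ≤ X (z - O) ∧
      (p : ℝ) - q ≤ Y (z - O) ∧ X (z - O) + Y (z - O) ≤ p + 1 := by
    intro p q hqp z
    rw [tile, if_pos hqp, mem_G a1 a2 a3 a4 a5 one_ne_zero, div_one, div_one]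
    constructor <;> rintro ⟨h1, h2, h3⟩ <;> refine ⟨?_, ?_, ?_⟩ <;> linarith
  have dn : ∀ p q : ℕ, p < q → ∀ z, z ∈ tile O u v p q ↔ X (z - O) ≤ p + 1 ∧
      Y (z - O) ≤ (q : ℝ) - p ∧ (q : ℝ) ≤ X (z - O) + Y (z - O) := by
    intro p q hqp z
    rw [tile, if_neg (by omega), mem_G a1 a2 a3 a4 a5 (by norm_num), div_neg, div_one, div_neg,
      div_one]
    constructor <;> rintro ⟨h1, h2, h3⟩ <;> refine ⟨?_, ?_, ?_⟩ <;> linarith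
  have whole : ∀ z, z ∈ G O u v 0 0 k ↔ 0 ≤ X (z - O) ∧ 0 ≤ Y (z - O) ∧
      X (z - O) + Y (z - O) ≤ k := by
    intro z
    rw [mem_G a1 a2 a3 a4 a5 hkR.ne', ← add_div, div_le_one hkR, le_div_iff₀ hkR,
      le_div_iff₀ hkR]
    simp
  have bd : ∀ p q : ℕ, ∀ z, z ∈ tile O u v p q → ((min p q : ℕ) : ℝ) ≤ X (z - O) ∧
      X (z - O) ≤ (min p q : ℕ) + 1 ∧ ((max p q : ℕ) : ℝ) ≤ X (z - O) + Y (z - O) ∧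
      X (z - O) + Y (z - O) ≤ (max p q : ℕ) + 1 := by
    intro p q z hz
    rcases le_or_gt q p with hqp | hqp
    · rw [up p q hqp] at hz
      rw [min_eq_right hqp, max_eq_left hqp]
      obtain ⟨h1, h2, h3⟩ := hz
      refine ⟨?_, ?_, ?_, ?_⟩ <;> linarith
    · rw [dn p q hqp] at hz
      rw [min_eq_left hqp.le, max_eq_right hqp.le]
      obtain ⟨h1, h2, h3⟩ := hz
      refine ⟨?_, ?_, ?_, ?_⟩ <;> linarith
  have hX : X ≠ 0 := by rintro rfl; simp at a1
  have hY : Y ≠ 0 := by rintro rfl; simp at a4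
  have hXY : X + Y ≠ 0 := by
    intro h0
    have : (X + Y) u = 0 := by rw [h0]; rfl
    simp [a1, a3] at this
  have sepX : ∀ p q p' q' : ℕ, min p q < min p' q' →
      interior (tile O u v p q) ∩ interior (tile O u v p' q') = ∅ := by
    intro p q p' q' hlt
    have hlt' : ((min p q : ℕ) : ℝ) + 1 ≤ (min p' q' : ℕ) := by exact_mod_cast hlt
    exact sep X hX O _ _ _ (fun z hz => ((bd p q z hz).2.1).trans hlt')
      (fun z hz => (bd p' q' z hz).1)
  have sepXY : ∀ p q p' q' : ℕ, max p q < max p' q' →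
      interior (tile O u v p q) ∩ interior (tile O u v p' q') = ∅ := by
    intro p q p' q' hlt
    have hlt' : ((max p q : ℕ) : ℝ) + 1 ≤ (max p' q' : ℕ) := by exact_mod_cast hlt
    exact sep (X + Y) hXY O _ _ _ (fun z hz => ((bd p q z hz).2.2.2).trans hlt')
      (fun z hz => (bd p' q' z hz).2.2.1)
  have sepY : ∀ p q : ℕ, p < q →
      interior (tile O u v p q) ∩ interior (tile O u v q p) = ∅ := by
    intro p q hlt
    exact sep Y hY O ((q : ℝ) - p) _ _ (fun z hz => ((dn p q hlt z).1 hz).2.1)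
      (fun z hz => ((up q p hlt.le z).1 hz).2.1)
  refine ⟨fun i => tile O u v i.1 i.2, ?_, ?_, ?_⟩
  · rintro ⟨p, q⟩
    simp only [tile]
    split_ifs
    · exact G_tri _ _ _ _ _ _ (Or.inl rfl)
    · exact G_tri _ _ _ _ _ _ (Or.inr rfl)
  · ext z
    rw [whole, Set.mem_iUnion]
    constructor
    · rintro ⟨h1, h2, h3⟩
      suffices hs : ∃ p q : ℕ, p < k ∧ q < k ∧ z ∈ tile O u v p q by
        obtain ⟨p, q, hp, hq, hz⟩ := hs
        exact ⟨(⟨p, hp⟩, ⟨q, hq⟩), hz⟩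
      have i1 := Nat.floor_le h1
      have i2 := Nat.lt_floor_add_one (X (z - O))
      have j1 := Nat.floor_le h2
      have j2 := Nat.lt_floor_add_one (Y (z - O))
      set i := ⌊X (z - O)⌋₊
      set j := ⌊Y (z - O)⌋₊
      rcases h3.lt_or_eq with h3 | h3
      · rcases lt_or_ge (X (z - O) + Y (z - O)) (i + j + 1) with h4 | h4
        · have : i + j < k := by
            have : (i : ℝ) + j < k := by linarith
            exact_mod_cast this
          refine ⟨i + j, i, this, by omega, ?_⟩
          rw [up _ _ (by omega)]
          push_cast
          refine ⟨?_, ?_, ?_⟩ <;> linarith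
        · have : i + j + 1 < k := by
            have : (i : ℝ) + j + 1 < k := by linarith
            exact_mod_cast this
          refine ⟨i, i + j + 1, by omega, this, ?_⟩
          rw [dn _ _ (by omega)]
          push_cast
          refine ⟨?_, ?_, ?_⟩ <;> linarith
      · obtain ⟨n, rfl⟩ : ∃ n, k = n + 1 := ⟨k - 1, by omega⟩
        push_cast at h3
        rcases le_or_gt i n with hi | hi
        · refine ⟨n, i, by omega, by omega, ?_⟩
          rw [up _ _ hi]
          refine ⟨?_, ?_, ?_⟩ <;> linarith
        · refine ⟨n, n, by omega, by omega, ?_⟩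
          rw [up _ _ le_rfl]
          have : (n : ℝ) + 1 ≤ i := by exact_mod_cast hi
          refine ⟨?_, ?_, ?_⟩ <;> linarith
    · rintro ⟨⟨p, q⟩, hz⟩
      have hp : ((p : ℕ) : ℝ) + 1 ≤ k := by exact_mod_cast p.2
      have hq : ((q : ℕ) : ℝ) + 1 ≤ k := by exact_mod_cast q.2
      have hp0 : (0 : ℝ) ≤ (p : ℕ) := Nat.cast_nonneg _
      have hq0 : (0 : ℝ) ≤ (q : ℕ) := Nat.cast_nonneg _
      simp only at hz
      rcases le_or_gt (q : ℕ) (p : ℕ) with hqp | hqp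
      · rw [up _ _ hqp] at hz
        have : ((q : ℕ) : ℝ) ≤ (p : ℕ) := by exact_mod_cast hqp
        obtain ⟨h1, h2, h3⟩ := hz
        refine ⟨?_, ?_, ?_⟩ <;> linarith
      · rw [dn _ _ hqp] at hz
        have : ((p : ℕ) : ℝ) + 1 ≤ (q : ℕ) := by exact_mod_cast hqp
        obtain ⟨h1, h2, h3⟩ := hz
        refine ⟨?_, ?_, ?_⟩ <;> linarith
  · rintro ⟨i, j⟩ ⟨i', j'⟩ hne
    simp only
    have hne' : ¬((i : ℕ) = i' ∧ (j : ℕ) = j') := by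
      rintro ⟨h1, h2⟩
      exact hne (by rw [Fin.ext h1, Fin.ext h2])
    generalize (i : ℕ) = p at hne' ⊢
    generalize (j : ℕ) = q at hne' ⊢
    generalize (i' : ℕ) = p' at hne' ⊢
    generalize (j' : ℕ) = q' at hne' ⊢
    rcases lt_trichotomy (min p q) (min p' q') with h1 | h1 | h1
    · exact sepX _ _ _ _ h1
    · rcases lt_trichotomy (max p q) (max p' q') with h2 | h2 | h2
      · exact sepXY _ _ _ _ h2
      · obtain ⟨e1, e2⟩ : p' = q ∧ q' = p := by omega
        rw [e1, e2]
        rcases lt_trichotomy p q with h3 | h3 | h3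
        · exact sepY _ _ h3
        · omega
        · rw [Set.inter_comm]; exact sepY _ _ h3
      · rw [Set.inter_comm]; exact sepXY _ _ _ _ h2
    · rw [Set.inter_comm]; exact sepX _ _ _ _ h1

lemma split_hull (P Q R D : Plane) (l : ℝ) (h0 : 0 < l) (h1 : l < 1)
    (hD : D = P + l • (Q - P)) :
    convexHull ℝ {P, Q, R} = convexHull ℝ {D, R, P} ∪ convexHull ℝ {D, R, Q} := by
  ext z
  rw [Set.mem_union, mem_hull, mem_hull, mem_hull]
  subst hD
  constructor
  · rintro ⟨x, y, hx, hy, hxy, rfl⟩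
    rcases le_or_gt x (l * (1 - y)) with hc | hc
    · left
      obtain ⟨w, rfl⟩ : ∃ w, x = l * w := ⟨x / l, by field_simp⟩
      have hw : 0 ≤ w := nonneg_of_mul_nonneg_right hx h0
      have hw' : w ≤ 1 - y := le_of_mul_le_mul_left hc h0
      exact ⟨y, 1 - y - w, hy, by linarith, by linarith, by module⟩
    · right
      have h1' : 0 < 1 - l := by linarith
      obtain ⟨w, hw⟩ : ∃ w, 1 - x - y = (1 - l) * w := ⟨(1 - x - y) / (1 - l), by field_simp⟩
      obtain rfl : x = 1 - y - (1 - l) * w := by linarith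
      have hw0 : 0 ≤ w := nonneg_of_mul_nonneg_right (by rw [← hw]; linarith) h1'
      have hw' : w ≤ 1 - y := by
        have : (1 - l) * w ≤ (1 - l) * (1 - y) := by linarith
        exact le_of_mul_le_mul_left this h1'
      exact ⟨y, 1 - y - w, hy, by linarith, by linarith, by module⟩
  · rintro (⟨x, y, hx, hy, hxy, rfl⟩ | ⟨x, y, hx, hy, hxy, rfl⟩)
    · have : 0 ≤ l * (1 - x - y) := mul_nonneg h0.le (by linarith)
      refine ⟨l * (1 - x - y), x, this, hx, by nlinarith, by module⟩
    · have : 0 ≤ l * (1 - x - y) := mul_nonneg h0.le (by linarith)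
      refine ⟨y + l * (1 - x - y), x, by linarith, hx, by nlinarith, by module⟩

set_option maxHeartbeats 1000000 in
theorem stmt19 (a b c : ℕ) (ha : 0 < a) (hb : 0 < b) (hc : 0 < c)
    (hab : Nat.Coprime a b) (hac : Nat.Coprime a c) (hbc : Nat.Coprime b c)
    (h : c ^ 2 = a ^ 2 + b ^ 2 + a * b) (m : ℕ) (hm : 0 < m)
    (htri : ∃ Δ : Set Plane,
      IsTriangle ((a : ℝ) * (a + 2 * b) * m) ((b : ℝ) * (b + 2 * a) * m)
        ((c : ℝ) ^ 2 * m) Δ ∧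
      TilesInto Δ ((a + 2 * b) * (b + 2 * a) * m ^ 2) a b c) :
    ∀ Δ : Set Plane,
      IsTriangle ((c : ℝ) ^ 2 * m) (((a : ℝ) + 2 * b) * c * m)
        (3 * ((a : ℝ) + b) * b * m) Δ →
      TilesInto Δ (3 * m ^ 2 * (a + 2 * b) * (a + b)) a b c := by
  rintro Δ ⟨P, Q, R, hQR, hPR, hPQ, rfl⟩
  obtain ⟨T1, hT1, htile⟩ := htri
  have haR : (0 : ℝ) < a := by exact_mod_cast ha
  have hbR : (0 : ℝ) < b := by exact_mod_cast hb
  have hcR : (0 : ℝ) < c := by exact_mod_cast hc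
  have hmR : (0 : ℝ) < m := by exact_mod_cast hm
  have hR : (c : ℝ) ^ 2 = a ^ 2 + b ^ 2 + a * b := by exact_mod_cast h
  have hnd : ND a b c := by
    unfold ND
    rw [hR]
    have : (0 : ℝ) < a ^ 2 * b ^ 2 := by positivity
    nlinarith
  obtain ⟨l, hl⟩ : ∃ l : ℝ, l = (a + 2 * b) / (3 * (a + b)) := ⟨_, rfl⟩
  have hl0 : 0 < l := by rw [hl]; positivity
  have hl1 : l < 1 := by rw [hl, div_lt_one (by positivity)]; linarith
  obtain ⟨D, hD⟩ : ∃ D, D = P + l • (Q - P) := ⟨_, rfl⟩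
  have hl' : l * (3 * (a + b)) = a + 2 * b := by rw [hl]; field_simp
  obtain ⟨k, hk⟩ : ∃ k : ℕ, k = (a + 2 * b) * m := ⟨_, rfl⟩
  have hk0 : 0 < k := by rw [hk]; positivity
  have hkR : (0 : ℝ) < k := by exact_mod_cast hk0
  have hkR' : (k : ℝ) = (a + 2 * b) * m := by rw [hk]; push_cast; ring
  have hPQ' : ‖Q - P‖ = 3 * ((a : ℝ) + b) * b * m := by rw [← dist_eq_norm, dist_comm, hPQ]
  have dP : ‖P - D‖ = k * b := by
    rw [hD, show P - (P + l • (Q - P)) = (-l) • (Q - P) by module, norm_smul, hPQ',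
      Real.norm_eq_abs, abs_neg, abs_of_pos hl0, hkR']
    linear_combination (b * m : ℝ) * hl'
  have dQ : dist Q D = (b : ℝ) * (b + 2 * a) * m := by
    rw [dist_eq_norm, hD, show Q - (P + l • (Q - P)) = (1 - l) • (Q - P) by module, norm_smul, hPQ',
      Real.norm_eq_abs, abs_of_pos (by linarith)]
    linear_combination (-b * m : ℝ) * hl'
  have dR : ‖R - D‖ = k * a := by
    rw [← sq_eq_sq₀ (norm_nonneg _) (by positivity),
      show R - D = (-(1 - l)) • (P - R) + (-l) • (Q - R) by rw [hD]; module, norm_comb,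
      show P - R - (Q - R) = -(Q - P) by abel, norm_neg, hPQ', ← dist_eq_norm, ← dist_eq_norm,
      hPR, hQR, hkR', hl]
    have hc4 : ((c : ℝ) ^ 2 * m) ^ 2 = (a ^ 2 + b ^ 2 + a * b) ^ 2 * m ^ 2 := by rw [hR]; ring
    have hc2 : (((a : ℝ) + 2 * b) * c * m) ^ 2
      = (a + 2 * b) ^ 2 * (a ^ 2 + b ^ 2 + a * b) * m ^ 2 := by rw [← hR]; ring
    rw [hc4, hc2]
    field_simp
    ring
  have dPR : ‖(R - D) - (P - D)‖ = k * c := by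
    rw [show (R - D) - (P - D) = R - P by abel, ← dist_eq_norm, dist_comm, hPR, hkR']; ring
  rw [split_hull P Q R D l hl0 hl1 hD]
  -- the scaled copy
  have hsc : ∀ w : Plane, ∀ t : ℝ, ‖w‖ = k * t → ‖(k : ℝ)⁻¹ • w‖ = t := by
    intro w t hw
    rw [norm_smul, hw, norm_inv, Real.norm_of_nonneg hkR.le]
    field_simp
  have n1 := hsc _ _ dR
  have n2 := hsc _ _ dP
  have n3 := hsc _ _ dPR
  rw [smul_sub] at n3
  have t2 : TI (Fin k × Fin k) (convexHull ℝ {D, R, P}) a b c := by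
    have := quad D ((k : ℝ)⁻¹ • (R - D)) ((k : ℝ)⁻¹ • (P - D)) (by rw [n1, n2, n3]; exact hnd) k hk0
    rw [n1, n2, n3] at this
    convert this using 1
    unfold G
    simp only [zero_smul, add_zero, zero_add, smul_smul, mul_inv_cancel₀ hkR.ne', one_smul]
    simp
  have hT1' : IsTriangle ((a : ℝ) * (a + 2 * b) * m) ((b : ℝ) * (b + 2 * a) * m)
        ((c : ℝ) ^ 2 * m) (convexHull ℝ {D, R, Q}) := by
    refine ⟨Q, R, D, ?_, dQ, hQR, ?_⟩
    · rw [dist_eq_norm, dR, hkR']; ring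
    · congr 1
      ext w
      simp only [Set.mem_insert_iff, Set.mem_singleton_iff]
      tauto
  have hnd1 : ND ((a : ℝ) * (a + 2 * b) * m) ((b : ℝ) * (b + 2 * a) * m) ((c : ℝ) ^ 2 * m) := by
    unfold ND
    rw [hR]
    have : 0 < ((a : ℝ) * (a + 2 * b) * m) ^ 2 * ((b : ℝ) * (b + 2 * a) * m) ^ 2 := by positivity
    have e : ((a : ℝ) * (a + 2 * b) * m) ^ 2 + ((b : ℝ) * (b + 2 * a) * m) ^ 2
        - (((a : ℝ) ^ 2 + b ^ 2 + a * b) * m) ^ 2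
        = ((a : ℝ) * (a + 2 * b) * m) * ((b : ℝ) * (b + 2 * a) * m) := by ring
    rw [e]
    linarith [mul_pow ((a : ℝ) * (a + 2 * b) * m) ((b : ℝ) * (b + 2 * a) * m) 2]
  obtain ⟨f, hf⟩ := isTriangle_congr hnd1 hT1 hT1'
  have t1 := TI_image f (TI_of htile)
  rw [hf] at t1
  have hndD : ND ‖R - D‖ ‖P - D‖ ‖(R - D) - (P - D)‖ := by
    rw [dR, dP, dPR]
    unfold ND at hnd ⊢
    have : (0 : ℝ) < k ^ 4 := by positivity
    have hk4 := mul_lt_mul_of_pos_left hnd this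
    calc _ = (k : ℝ) ^ 4 * ((a : ℝ) ^ 2 + b ^ 2 - c ^ 2) ^ 2 := by ring
      _ < _ := hk4
      _ = _ := by ring
  obtain ⟨X, Y, a1, a2, a3, a4, a5⟩ := coords _ _ hndD
  have hY : Y ≠ 0 := by rintro rfl; simp at a4
  have hYQ : Y (Q - D) ≤ 0 := by
    have e : l • (Q - D) = (-(1 - l)) • (P - D) := by rw [hD]; module
    have := congrArg Y e
    rw [map_smul, map_smul, a4, smul_eq_mul, smul_eq_mul] at this
    by_contra hcon
    push Not at hcon
    nlinarith [mul_pos hl0 hcon]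
  have hdis : interior (convexHull ℝ {D, R, P}) ∩ interior (convexHull ℝ {D, R, Q}) = ∅ := by
    rw [Set.inter_comm]
    refine sep Y hY D 0 _ _ ?_ ?_
    · intro z hz
      obtain ⟨x, y, hx, hy, hxy, rfl⟩ := (mem_hull _ _ _ _).1 hz
      rw [show D + x • (R - D) + y • (Q - D) - D = x • (R - D) + y • (Q - D) by abel, map_add,
        map_smul, map_smul, a3, smul_eq_mul, smul_eq_mul]
      nlinarith [mul_nonneg hy (neg_nonneg.2 hYQ)]
    · intro z hz
      obtain ⟨x, y, hx, hy, hxy, rfl⟩ := (mem_hull _ _ _ _).1 hz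
      rw [show D + x • (R - D) + y • (P - D) - D = x • (R - D) + y • (P - D) by abel, map_add,
        map_smul, map_smul, a3, a4, smul_eq_mul, smul_eq_mul]
      linarith
  have t := TI_union hdis t2 t1
  haveI : Nonempty (Fin k) := ⟨⟨0, hk0⟩⟩
  refine of_TI hnd ?_ t
  simp only [Fintype.card_sum, Fintype.card_prod, Fintype.card_fin, hk]
  ring
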